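/- Let n ≥ 2, q > 1, and let a_1 ≥ a_2 ≥ … ≥ a_n ≥ 0 be real numbers, not all zero. Then the Lorentz space ℓ_{w,q}^n is isometric to a subspace of L_q if and only if a_1 = a_2 = … = a_n (so that ℓ_{w,q}^n = ℓ_q^n up to a constant multiple of the norm). -/

import Mathlib

/-!
For `q > 1` the functional `x ↦ ∫ |T x| ^ q` of a linear map `T` into `L_q` is smooth: as an
integral of convex functions which are differentiable along every line, its second difference in
the direction `t • y` is `o(t)` as `t → 0+`. Convexity makes the second difference quotients
monotone in `t`, so the quotient at `t = 1` dominates.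

The `q`-th power of the Lorentz norm, on the other hand, has a corner at the all-ones vector `1`
as soon as two weights `b k > b l` differ. It is the maximum of `∑ b i * |x (τ i)| ^ q` over all
permutations `τ`; testing `1 + t (e_k - e_l)` with the identity and `1 - t (e_k - e_l)` with the
transposition of `k` and `l` gives, by Bernoulli's inequality, the same lower bound
`∑ b i + q t (b k - b l)` in both cases. The second difference is thus at least
`2 q t (b k - b l)`, which is not `o(t)`.
-/

open MeasureTheory

/-- The non-increasing rearrangement of `(|x 0|, …, |x (n-1)|)`. -/
noncomputable def dstar {n : ℕ} (x : Fin n → ℝ) : Fin n → ℝ :=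
  fun i => |x (Tuple.sort (fun j => -|x j|) i)|

open Filter Set Topology

section SecondDiff

variable {E : Type*} [AddCommGroup E]

/-- The symmetric second difference of `F` at `x` with increment `y`. A convex function is smooth
at `x` along `y` when its second difference with increment `t • y` is `o(t)`. -/
def secondDiff (F : E → ℝ) (x y : E) : ℝ :=
  F (x + y) + F (x - y) - 2 * F x

theorem integral_secondDiff {Ω : Type*} [MeasurableSpace Ω] {μ : Measure Ω} {Φ : E → Ω → ℝ}
    (hint : ∀ z, Integrable (Φ z) μ) (x y : E) :
    ∫ ω, secondDiff (Φ · ω) x y ∂μ = secondDiff (fun z => ∫ ω, Φ z ω ∂μ) x y := by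
  have hsum : Integrable (fun ω => Φ (x + y) ω + Φ (x - y) ω) μ := (hint _).add (hint _)
  simp only [secondDiff]
  rw [integral_sub hsum ((hint x).const_mul 2), integral_add (hint _) (hint _),
    integral_const_mul]

theorem integrable_secondDiff {Ω : Type*} [MeasurableSpace Ω] {μ : Measure Ω} {Φ : E → Ω → ℝ}
    (hint : ∀ z, Integrable (Φ z) μ) (x y : E) :
    Integrable (fun ω => secondDiff (Φ · ω) x y) μ :=
  ((hint _).add (hint _)).sub ((hint x).const_mul 2)

variable [Module ℝ E] {F : E → ℝ} {x y : E}

theorem secondDiff_nonneg (hF : ConvexOn ℝ univ F) (x y : E) : 0 ≤ secondDiff F x y := by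
  have hmid : F x ≤ (1 / 2 : ℝ) • F (x + y) + (1 / 2 : ℝ) • F (x - y) := by
    calc F x = F ((1 / 2 : ℝ) • (x + y) + (1 / 2 : ℝ) • (x - y)) := by congr 1; module
      _ ≤ _ := hF.2 (mem_univ _) (mem_univ _) (by norm_num) (by norm_num) (by norm_num)
  rw [smul_eq_mul, smul_eq_mul] at hmid
  unfold secondDiff
  linarith

theorem secondDiff_smul_le (hF : ConvexOn ℝ univ F) {t : ℝ} (ht : t ∈ Icc (0 : ℝ) 1) (x y : E) :
    secondDiff F x (t • y) ≤ t * secondDiff F x y := by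
  have hchord (z : E) : F (x + t • z) ≤ (1 - t) * F x + t * F (x + z) := by
    calc F (x + t • z) = F ((1 - t) • x + t • (x + z)) := by congr 1; module
      _ ≤ _ := hF.2 (mem_univ _) (mem_univ _) (sub_nonneg.2 ht.2) ht.1 (by ring)
  have hpos := hchord y
  have hneg := hchord (-y)
  rw [smul_neg, ← sub_eq_add_neg, ← sub_eq_add_neg] at hneg
  unfold secondDiff
  linarith

theorem tendsto_inv_mul_secondDiff (hF : LineDifferentiableAt ℝ F x y) :
    Tendsto (fun t : ℝ => t⁻¹ * secondDiff F x (t • y)) (𝓝[>] 0) (𝓝 0) := by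
  have hpos := hF.hasLineDerivAt.tendsto_slope_zero_right
  have hneg := (hF.hasLineDerivAt.smul (-1)).tendsto_slope_zero_right
  convert hpos.add hneg using 2 with t
  · simp only [secondDiff, smul_eq_mul, neg_smul, one_smul, smul_neg, sub_eq_add_neg]
    ring
  · simp

theorem tendsto_inv_mul_secondDiff_integral {Ω : Type*} [MeasurableSpace Ω] {μ : Measure Ω}
    {Φ : E → Ω → ℝ} (hconv : ∀ᵐ ω ∂μ, ConvexOn ℝ univ (Φ · ω))
    (hdiff : ∀ᵐ ω ∂μ, LineDifferentiableAt ℝ (Φ · ω) x y) (hint : ∀ z, Integrable (Φ z) μ) :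
    Tendsto (fun t : ℝ => t⁻¹ * secondDiff (fun z => ∫ ω, Φ z ω ∂μ) x (t • y))
      (𝓝[>] 0) (𝓝 0) := by
  simp only [← integral_secondDiff hint, ← integral_const_mul]
  suffices hlim : Tendsto (fun t : ℝ => ∫ ω, t⁻¹ * secondDiff (Φ · ω) x (t • y) ∂μ)
      (𝓝[>] 0) (𝓝 (∫ _, 0 ∂μ)) by simpa only [integral_zero] using hlim
  refine tendsto_integral_filter_of_dominated_convergence (fun ω => secondDiff (Φ · ω) x y)
    (.of_forall fun t => ((integrable_secondDiff hint x (t • y)).const_mul _).aestronglyMeasurable)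
    ?_ (integrable_secondDiff hint x y) (hdiff.mono fun ω => tendsto_inv_mul_secondDiff)
  filter_upwards [Ioc_mem_nhdsGT (zero_lt_one' ℝ)] with t ht
  filter_upwards [hconv] with ω hω
  rw [Real.norm_of_nonneg (mul_nonneg (inv_nonneg.2 ht.1.le) (secondDiff_nonneg hω _ _)),
    inv_mul_le_iff₀ ht.1]
  exact secondDiff_smul_le hω (Ioc_subset_Icc_self ht) x y

theorem convexOn_abs_rpow {q : ℝ} (hq : 1 ≤ q) : ConvexOn ℝ univ fun u : ℝ => |u| ^ q := by
  refine ⟨convex_univ, fun u _ v _ s t hs ht hst => ?_⟩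
  calc |s • u + t • v| ^ q ≤ (s • |u| + t • |v|) ^ q :=
        Real.rpow_le_rpow (abs_nonneg _)
          (convexOn_univ_norm.2 (mem_univ u) (mem_univ v) hs ht hst) (by linarith)
    _ ≤ s • |u| ^ q + t • |v| ^ q :=
        (convexOn_rpow hq).2 (abs_nonneg u) (abs_nonneg v) hs ht hst

theorem tendsto_inv_mul_secondDiff_integral_abs_rpow {Ω : Type*} [MeasurableSpace Ω]
    {μ : Measure Ω} {q : ℝ} (hq : 1 < q) (T : E →ₗ[ℝ] Ω → ℝ)
    (hint : ∀ z, Integrable (fun ω => |T z ω| ^ q) μ) (x y : E) :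
    Tendsto (fun t : ℝ => t⁻¹ * secondDiff (fun z => ∫ ω, |T z ω| ^ q ∂μ) x (t • y))
      (𝓝[>] 0) (𝓝 0) := by
  refine tendsto_inv_mul_secondDiff_integral (.of_forall fun ω => ?_) (.of_forall fun ω => ?_) hint
  · exact (convexOn_abs_rpow hq.le).comp_linearMap (LinearMap.proj ω ∘ₗ T)
  · have hline : DifferentiableAt ℝ (fun t : ℝ => T x ω + t * T y ω) 0 := by fun_prop
    simpa [LineDifferentiableAt, Function.comp_def] using
      (differentiable_norm_rpow hq).differentiableAt.comp 0 hline

end SecondDiff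

section Lorentz

variable {n : ℕ} {b : Fin n → ℝ} {q : ℝ}

/-- The `q`-th power `‖x‖_{w,q} ^ q` of the Lorentz norm with weights `b 0, …, b (n - 1)`. -/
noncomputable def lorentzModular (b : Fin n → ℝ) (q : ℝ) (x : Fin n → ℝ) : ℝ :=
  ∑ i, b i * dstar x i ^ q

theorem dstar_nonneg (x : Fin n → ℝ) (i : Fin n) : 0 ≤ dstar x i :=
  abs_nonneg _

theorem dstar_antitone (x : Fin n → ℝ) : Antitone (dstar x) := fun _ _ hij =>
  neg_le_neg_iff.1 (Tuple.monotone_sort (fun j => -|x j|) hij)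

theorem lorentzModular_nonneg (hb0 : 0 ≤ b) (x : Fin n → ℝ) : 0 ≤ lorentzModular b q x :=
  Finset.sum_nonneg fun i _ => mul_nonneg (hb0 i) (Real.rpow_nonneg (dstar_nonneg x i) q)

theorem lorentzModular_rpow_one_div_rpow (hb0 : 0 ≤ b) (hq : q ≠ 0) (x : Fin n → ℝ) :
    (lorentzModular b q x ^ (1 / q)) ^ q = lorentzModular b q x := by
  rw [one_div, Real.rpow_inv_rpow (lorentzModular_nonneg hb0 x) hq]

theorem lorentzModular_const (c : ℝ) (x : Fin n → ℝ) :
    lorentzModular (fun _ => c) q x = c * ∑ i, |x i| ^ q := by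
  rw [lorentzModular, ← Finset.mul_sum]
  exact congrArg (c * ·) (Equiv.sum_comp (Tuple.sort fun j => -|x j|) fun i => |x i| ^ q)

theorem integral_smul_count_eq_lorentzModular {c : ℝ} (hc : 0 ≤ c) (x : Fin n → ℝ) :
    ∫ i, |x i| ^ q ∂(ENNReal.ofReal c • Measure.count) = lorentzModular (fun _ => c) q x := by
  rw [integral_smul_measure, integral_count, ENNReal.toReal_ofReal hc, smul_eq_mul,
    lorentzModular_const]

theorem lorentzModular_one (b : Fin n → ℝ) (q : ℝ) : lorentzModular b q 1 = ∑ i, b i := by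
  simp [lorentzModular, dstar]

theorem sum_mul_abs_comp_perm_rpow_le_lorentzModular (hq : 0 ≤ q) (hb : Antitone b)
    (x : Fin n → ℝ) (τ : Equiv.Perm (Fin n)) :
    ∑ i, b i * |x (τ i)| ^ q ≤ lorentzModular b q x := by
  have hanti : Antitone fun i => dstar x i ^ q := fun i j hij =>
    Real.rpow_le_rpow (dstar_nonneg x j) (dstar_antitone x hij) hq
  simpa [dstar, lorentzModular] using (hb.monovary hanti).sum_mul_comp_perm_le_sum_mul
    (σ := τ.trans (Tuple.sort fun j => -|x j|).symm)

theorem lorentzModular_pos (hq : 0 ≤ q) (hb : Antitone b) (hb0 : 0 ≤ b) (hb_ne : b ≠ 0)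
    {x : Fin n → ℝ} (hx : x ≠ 0) : 0 < lorentzModular b q x := by
  obtain ⟨k, hk⟩ := Function.ne_iff.1 hb_ne
  obtain ⟨j, hj⟩ := Function.ne_iff.1 hx
  refine lt_of_lt_of_le ?_
    (sum_mul_abs_comp_perm_rpow_le_lorentzModular hq hb x (Equiv.swap k j))
  refine Finset.sum_pos' (fun i _ => mul_nonneg (hb0 i) (by positivity)) ⟨k, Finset.mem_univ k, ?_⟩
  rw [Equiv.swap_apply_left]
  exact mul_pos ((hb0 k).lt_of_ne' hk) (Real.rpow_pos_of_pos (abs_pos.2 hj) q)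

theorem sum_add_mul_sum_comp_perm_le_lorentzModular (hq : 1 ≤ q) (hb : Antitone b) (hb0 : 0 ≤ b)
    {d : Fin n → ℝ} (hd : ∀ i, -1 ≤ d i) (τ : Equiv.Perm (Fin n)) :
    ∑ i, b i + q * ∑ i, b i * d (τ i) ≤ lorentzModular b q (1 + d) := by
  calc ∑ i, b i + q * ∑ i, b i * d (τ i)
      = ∑ i, b i * (1 + q * d (τ i)) := by
        rw [Finset.mul_sum, ← Finset.sum_add_distrib]
        exact Finset.sum_congr rfl fun i _ => by ring
    _ ≤ ∑ i, b i * |(1 + d) (τ i)| ^ q := by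
        refine Finset.sum_le_sum fun i _ => mul_le_mul_of_nonneg_left ?_ (hb0 i)
        rw [Pi.add_apply, Pi.one_apply, abs_of_nonneg (by linarith [hd (τ i)])]
        exact one_add_mul_self_le_rpow_one_add (hd (τ i)) hq
    _ ≤ lorentzModular b q (1 + d) :=
        sum_mul_abs_comp_perm_rpow_le_lorentzModular (by linarith) hb (1 + d) τ

theorem two_mul_le_secondDiff_lorentzModular (hq : 1 ≤ q) (hb : Antitone b) (hb0 : 0 ≤ b)
    (k l : Fin n) {t : ℝ} (ht : t ∈ Icc (0 : ℝ) 1) :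
    2 * (q * (t * (b k - b l))) ≤
      secondDiff (lorentzModular b q) 1 (t • (Pi.single k 1 - Pi.single l 1)) := by
  set d : Fin n → ℝ := t • (Pi.single k 1 - Pi.single l 1) with hd
  have hd_bound (i : Fin n) : -1 ≤ d i ∧ d i ≤ 1 := by
    simp only [hd, Pi.smul_apply, Pi.sub_apply, Pi.single_apply, smul_eq_mul]
    split_ifs <;> constructor <;> linarith [ht.1, ht.2]
  have hd_swap (i : Fin n) : (-d) (Equiv.swap k l i) = d i := by
    simp only [hd, Pi.neg_apply, Pi.smul_apply, Pi.sub_apply, Pi.single_apply,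
      Equiv.swap_apply_eq_iff, Equiv.swap_apply_left, Equiv.swap_apply_right, smul_eq_mul]
    ring
  have hsum : ∑ i, b i * d i = t * (b k - b l) := by
    simp [hd, mul_sub, Finset.sum_sub_distrib, Pi.single_apply, mul_comm]
  have hpos : ∑ i, b i + q * (t * (b k - b l)) ≤ lorentzModular b q (1 + d) := by
    simpa only [Equiv.refl_apply, hsum] using sum_add_mul_sum_comp_perm_le_lorentzModular
      hq hb hb0 (fun i => (hd_bound i).1) (Equiv.refl _)
  have hneg : ∑ i, b i + q * (t * (b k - b l)) ≤ lorentzModular b q (1 - d) := by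
    simpa only [hd_swap, hsum, ← sub_eq_add_neg] using sum_add_mul_sum_comp_perm_le_lorentzModular
      hq hb hb0 (d := -d) (fun i => neg_le_neg (hd_bound i).2) (Equiv.swap k l)
  rw [secondDiff, lorentzModular_one]
  linarith

variable {Ω : Type*} [MeasurableSpace Ω] {μ : Measure Ω} {T : (Fin n → ℝ) →ₗ[ℝ] Ω → ℝ}

theorem integrable_of_integral_eq_lorentzModular (hq : 0 < q) (hb : Antitone b) (hb0 : 0 ≤ b)
    (hb_ne : b ≠ 0) (hT : ∀ x, ∫ ω, |T x ω| ^ q ∂μ = lorentzModular b q x) (x : Fin n → ℝ) :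
    Integrable (fun ω => |T x ω| ^ q) μ := by
  rcases eq_or_ne x 0 with rfl | hx
  · simp [Real.zero_rpow hq.ne']
  · exact .of_integral_ne_zero (hT x ▸ (lorentzModular_pos hq.le hb hb0 hb_ne hx).ne')

theorem weights_eq_of_integral_eq_lorentzModular (hq : 1 < q) (hb : Antitone b) (hb0 : 0 ≤ b)
    (hb_ne : b ≠ 0) (hT : ∀ x, ∫ ω, |T x ω| ^ q ∂μ = lorentzModular b q x) (k l : Fin n) :
    b k = b l := by
  have hint := integrable_of_integral_eq_lorentzModular (zero_lt_one.trans hq) hb hb0 hb_ne hT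
  suffices hle : ∀ k l, b k ≤ b l from (hle k l).antisymm (hle l k)
  intro k l
  have hsmooth := tendsto_inv_mul_secondDiff_integral_abs_rpow hq T hint 1
    (Pi.single k 1 - Pi.single l 1)
  simp only [hT] at hsmooth
  have hcorner : 2 * (q * (b k - b l)) ≤ 0 := by
    refine ge_of_tendsto hsmooth ?_
    filter_upwards [Ioc_mem_nhdsGT (zero_lt_one' ℝ)] with t ht
    rw [le_inv_mul_iff₀ ht.1]
    linarith [two_mul_le_secondDiff_lorentzModular hq.le hb hb0 k l (Ioc_subset_Icc_self ht)]
  nlinarith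

theorem antitone_fin_val_add_one {α : Type*} [Preorder α] {a : ℕ → α}
    (ha : ∀ i, 1 ≤ i → i + 1 ≤ n → a (i + 1) ≤ a i) : Antitone fun i : Fin n => a (i + 1) := by
  have hanti : AntitoneOn a (Icc 1 n) := antitoneOn_of_add_one_le ordConnected_Icc
    fun i _ hi hi' => ha i hi.1 hi'.2
  exact fun i j hij => hanti ⟨by omega, i.2⟩ ⟨by omega, j.2⟩ (Nat.succ_le_succ hij)

end Lorentz

/-- For `n ≥ 2`, `q > 1` and weights `a 1 ≥ a 2 ≥ … ≥ a n ≥ 0` not all zero,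
the Lorentz space `ℓ_{w,q}^n` is isometric to a subspace of `L_q` iff all the
weights are equal. -/
theorem stmt1 (n : ℕ) (hn : 2 ≤ n) (q : ℝ) (hq : 1 < q)
    (a : ℕ → ℝ)
    (hmono : ∀ i, 1 ≤ i → i + 1 ≤ n → a (i + 1) ≤ a i)
    (hnonneg : ∀ i, 1 ≤ i → i ≤ n → 0 ≤ a i)
    (hnz : ∃ i, 1 ≤ i ∧ i ≤ n ∧ a i ≠ 0) :
    (∃ (Ω : Type) (_ : MeasurableSpace Ω) (μ : Measure Ω)
        (T : (Fin n → ℝ) →ₗ[ℝ] (Ω → ℝ)),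
      ∀ x : Fin n → ℝ,
        (∫ ω, |T x ω| ^ q ∂μ) =
          ((∑ i : Fin n, a (i.1 + 1) * dstar x i ^ q) ^ (1 / q)) ^ q) ↔
    (∀ i j, 1 ≤ i → i ≤ n → 1 ≤ j → j ≤ n → a i = a j) := by
  let b : Fin n → ℝ := fun i => a (i + 1)
  have hb_apply (i : ℕ) (hi : 1 ≤ i) (hin : i ≤ n) : b ⟨i - 1, by omega⟩ = a i :=
    congrArg a (Nat.sub_add_cancel hi)
  have hb : Antitone b := antitone_fin_val_add_one hmono
  have hb0 : 0 ≤ b := fun i => hnonneg _ (by omega) i.2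
  have hb_ne : b ≠ 0 := by
    obtain ⟨i, hi, hin, hne⟩ := hnz
    exact Function.ne_iff.2 ⟨_, (hb_apply i hi hin).trans_ne hne⟩
  have hnorm (x : Fin n → ℝ) : ((∑ i : Fin n, a (i.1 + 1) * dstar x i ^ q) ^ (1 / q)) ^ q =
      lorentzModular b q x :=
    lorentzModular_rpow_one_div_rpow hb0 (by linarith) x
  simp only [hnorm]
  constructor
  · rintro ⟨Ω, _, μ, T, hT⟩ i j hi hin hj hjn
    rw [← hb_apply i hi hin, ← hb_apply j hj hjn]
    exact weights_eq_of_integral_eq_lorentzModular hq hb hb0 hb_ne hT _ _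
  · intro heq
    have hconst : b = fun _ => a 1 := funext fun i => heq _ _ (by omega) i.2 le_rfl (by omega)
    rw [hconst]
    exact ⟨Fin n, inferInstance, ENNReal.ofReal (a 1) • Measure.count, LinearMap.id,
      integral_smul_count_eq_lorentzModular (hnonneg 1 le_rfl (by omega))⟩
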